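/- Let P be a finite 2-group containing no subgroup isomorphic to C4 × C2. Then P is elementary abelian, cyclic, generalized quaternion, dihedral, or semidihedral. -/

import Mathlib

/-- The relators of the semidihedral group of order `2^(n+1)`:
`⟨h, a | h^(2^n) = a^2 = 1, a h a = h^(2^(n-1) - 1)⟩`. -/
def semidihedralRels (n : ℕ) : Set (FreeGroup Bool) :=
  { FreeGroup.of true ^ (2 ^ n), FreeGroup.of false ^ 2,
    FreeGroup.of false * FreeGroup.of true * FreeGroup.of false *
      (FreeGroup.of true ^ (2 ^ (n - 1) - 1))⁻¹ }

/-- The semidihedral group of order `2^(n+1)`. -/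
abbrev SemidihedralGroup (n : ℕ) := PresentedGroup (semidihedralRels n)

/-- `C4 × C2`. -/
abbrev C4xC2 := Multiplicative (ZMod 4) × Multiplicative (ZMod 2)

/-! Once `P` has an element of order 4, a look at the second centre of `P` yields some `y` of order
4 whose only conjugates are `y` and `y⁻¹`. Every involution commuting with an element `v` of order
4 is `v ^ 2`, which forces the centralizer of `y` to be cyclic; say it is generated by `h`. Its
index is at most 2, and any `g` outside it inverts `y`, so `g` acts on `⟨h⟩` as a power map
`h ↦ h ^ k` with `k ≡ -1` modulo 4. Then `k - 1` is twice an odd number, so the elements `g ^ 2` and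
`h ^ (k + 1)`, being killed by `k - 1`, are each trivial or equal to the involution of `⟨h⟩`. The
resulting four cases are the dihedral, generalized quaternion and (twice) semidihedral
presentations. -/

section SquareRootsOfOne

variable {G : Type*} [Group G] {x y t h : G}

theorem eq_one_or_eq_of_mem_zpowers (ht : t ^ 2 = 1) (hx : x ∈ Subgroup.zpowers t) :
    x = 1 ∨ x = t := by
  obtain ⟨i, rfl⟩ := Subgroup.mem_zpowers_iff.1 hx
  have ht' : t ^ (2 : ℤ) = 1 := mod_cast ht
  rcases Int.even_or_odd' i with ⟨q, rfl | rfl⟩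
  · exact .inl (by rw [zpow_mul, ht', one_zpow])
  · exact .inr (by rw [zpow_add, zpow_mul, ht', one_zpow, one_mul, zpow_one])

theorem eq_one_or_eq_pow_of_sq_eq_one {m : ℕ} (hh : orderOf h = 2 * m)
    (hx : x ∈ Subgroup.zpowers h) (hx2 : x ^ 2 = 1) : x = 1 ∨ x = h ^ m := by
  obtain ⟨i, rfl⟩ := Subgroup.mem_zpowers_iff.1 hx
  obtain ⟨q, rfl⟩ : (m : ℤ) ∣ i := by
    rw [← zpow_natCast, ← zpow_mul, ← orderOf_dvd_iff_zpow_eq_one, hh, mul_comm i] at hx2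
    exact Int.dvd_of_mul_dvd_mul_left two_ne_zero (by exact_mod_cast hx2)
  refine eq_one_or_eq_of_mem_zpowers ?_ ⟨q, by simp only [zpow_mul, zpow_natCast]⟩
  rw [← pow_mul, mul_comm, ← hh, pow_orderOf_eq_one]

theorem commute_of_sq_eq_one (hx : x ^ 2 = 1) (hy : y ^ 2 = 1) (hxy : (x * y) ^ 2 = 1) :
    Commute x y := by
  rw [sq, mul_eq_one_iff_eq_inv] at hx hy hxy
  rw [mul_inv_rev, ← hx, ← hy] at hxy
  exact hxy

end SquareRootsOfOne

section ForbiddenSubgroup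

variable {G : Type*} [Group G] {x y t : G}

theorem exists_injective_zmod_prod (hxy : Commute x y)
    (hdisj : Disjoint (Subgroup.zpowers x) (Subgroup.zpowers y)) :
    ∃ f : Multiplicative (ZMod (orderOf x)) × Multiplicative (ZMod (orderOf y)) →* G,
      Function.Injective f := by
  let e (g : G) : Multiplicative (ZMod (orderOf g)) ≃* Subgroup.zpowers g :=
    zmodMulEquivOfGenerator (g := ⟨g, Subgroup.mem_zpowers g⟩)
      (by rintro ⟨_, i, rfl⟩; exact ⟨i, rfl⟩) (Nat.card_zpowers g)
  let f (g : G) : Multiplicative (ZMod (orderOf g)) →* G :=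
    (Subgroup.zpowers g).subtype.comp (e g).toMonoidHom
  have hinj (g : G) : Function.Injective (f g) :=
    Subtype.val_injective.comp (e g).injective
  have hrange (g : G) : (f g).range ≤ Subgroup.zpowers g := by
    rintro _ ⟨m, rfl⟩
    exact (e g m).2
  have hcomm (m n) : Commute (f x m) (f y n) := by
    obtain ⟨i, hi⟩ := hrange x ⟨m, rfl⟩
    obtain ⟨j, hj⟩ := hrange y ⟨n, rfl⟩
    rw [← hi, ← hj]
    exact hxy.zpow_zpow i j
  exact ⟨(f x).noncommCoprod (f y) hcomm, (MonoidHom.noncommCoprod_injective _ _ _).2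
    ⟨hinj x, hinj y, hdisj.mono (hrange x) (hrange y)⟩⟩

theorem eq_one_or_eq_sq_of_commute (hno : ¬ ∃ f : C4xC2 →* G, Function.Injective f)
    (hy : orderOf y = 4) (ht : t ^ 2 = 1) (hyt : Commute y t) : t = 1 ∨ t = y ^ 2 := by
  by_cases hty : t ∈ Subgroup.zpowers y
  · exact eq_one_or_eq_pow_of_sq_eq_one hy hty ht
  refine absurd ?_ hno
  have hdisj : Disjoint (Subgroup.zpowers y) (Subgroup.zpowers t) := by
    refine Subgroup.disjoint_def.2 fun hxy hxt => ?_
    refine (eq_one_or_eq_of_mem_zpowers ht hxt).resolve_right ?_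
    rintro rfl
    exact hty hxy
  have ht2 : orderOf t = 2 :=
    orderOf_eq_prime ht fun h => hty (h ▸ one_mem _)
  have := exists_injective_zmod_prod hyt hdisj
  rwa [hy, ht2] at this

end ForbiddenSubgroup

section PGroup

variable {P : Type*} [Group P]

theorem exists_mem_normalizer_notMem_pow_mem [Group.IsNilpotent P] {p : ℕ}
    (hP : IsPGroup p P) {K : Subgroup P} (hK : K < ⊤) :
    ∃ g ∈ Subgroup.normalizer (K : Set P), g ∉ K ∧ g ^ p ∈ K := by
  classical
  obtain ⟨g, hgN, hgK⟩ := SetLike.exists_of_lt (Group.normalizerCondition_of_isNilpotent K hK)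
  have hex : ∃ m : ℕ, g ^ p ^ m ∈ K := (hP g).imp fun m hm => by rw [hm]; exact one_mem K
  obtain ⟨r, hr⟩ : ∃ r, Nat.find hex = r + 1 :=
    Nat.exists_eq_succ_of_ne_zero fun h0 => hgK <| by simpa [h0] using Nat.find_spec hex
  refine ⟨g ^ p ^ r, pow_mem hgN _, Nat.find_min hex (by omega), ?_⟩
  rw [← pow_mul, ← pow_succ, ← hr]
  exact Nat.find_spec hex

theorem mem_zpowers_zpow_of_odd (hP : IsPGroup 2 P) (x : P) {k : ℤ} (hk : Odd k) :
    x ∈ Subgroup.zpowers (x ^ k) := by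
  rw [mem_zpowers_zpow_iff]
  exact (hP.orderOf_coprime (Nat.coprime_two_left.2 (Int.natAbs_odd.2 hk)) x).symm

theorem exists_orderOf_eq_two_pow_add_two (hP : IsPGroup 2 P) {x : P} (hx : x ^ 2 ≠ 1) :
    ∃ n : ℕ, orderOf x = 2 ^ (n + 2) := by
  obtain ⟨m, hm⟩ := IsPGroup.iff_orderOf.1 hP x
  have hm2 : 2 ≤ m := by
    by_contra! h
    exact hx (orderOf_dvd_iff_pow_eq_one.1 (hm ▸ pow_dvd_pow 2 (Nat.le_of_lt_succ h)))
  exact ⟨m - 2, by rw [hm, Nat.sub_add_cancel hm2]⟩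

theorem exists_orderOf_pow_eq_four (hP : IsPGroup 2 P) {x : P} (hx : x ^ 2 ≠ 1) :
    ∃ i : ℕ, orderOf (x ^ i) = 4 := by
  obtain ⟨n, hn⟩ := exists_orderOf_eq_two_pow_add_two hP hx
  refine ⟨2 ^ n, ?_⟩
  rw [orderOf_pow_of_dvd (by positivity) (hn ▸ pow_dvd_pow 2 (Nat.le_add_right n 2)), hn, pow_add,
    Nat.mul_div_cancel_left _ (by positivity)]
  rfl

theorem sq_eq_one_of_zpow_sub_one_eq_one (hP : IsPGroup 2 P) {x : P} {k : ℤ}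
    (hk : k ≡ -1 [ZMOD 4]) (hx : x ^ (k - 1) = 1) : x ^ 2 = 1 := by
  obtain ⟨l, hl⟩ := hk.dvd
  have h1 : (x ^ 2) ^ (-2 * l - 1) = 1 := by
    rw [← zpow_natCast, ← zpow_mul, ← hx]
    congr 1
    push_cast
    omega
  have hmem := mem_zpowers_zpow_of_odd hP (x ^ 2) (k := -2 * l - 1) ⟨-l - 1, by ring⟩
  rwa [h1, Subgroup.zpowers_one_eq_bot, Subgroup.mem_bot] at hmem

end PGroup

section Conjugation

variable {G : Type*} [Group G] {g h x y : G} {k : ℤ}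

theorem conj_eq_iff_commute : g * x * g⁻¹ = x ↔ Commute g x :=
  mul_inv_eq_iff_eq_mul

theorem conj_eq_zpow_of_mem_zpowers (hk : g * h * g⁻¹ = h ^ k) (hx : x ∈ Subgroup.zpowers h) :
    g * x * g⁻¹ = x ^ k := by
  obtain ⟨i, rfl⟩ := Subgroup.mem_zpowers_iff.1 hx
  rw [← conj_zpow, hk, ← zpow_mul, ← zpow_mul, mul_comm]

theorem modEq_of_conj_eq_zpow (hk : g * h * g⁻¹ = h ^ k) (hy : y ∈ Subgroup.zpowers h) {i : ℤ}
    (hi : g * y * g⁻¹ = y ^ i) : k ≡ i [ZMOD orderOf y] := by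
  rw [← zpow_eq_zpow_iff_modEq, ← conj_eq_zpow_of_mem_zpowers hk hy, hi]

theorem exists_mul_sq_eq_one (hG : IsPGroup 2 G) (hk : g * h * g⁻¹ = h ^ k)
    (hk4 : k ≡ 1 [ZMOD 4]) (hg : g ^ 2 ∈ Subgroup.zpowers (h ^ 2)) :
    ∃ x ∈ Subgroup.zpowers h, (x * g) ^ 2 = 1 := by
  obtain ⟨j, hj⟩ := Subgroup.mem_zpowers_iff.1 hg
  obtain ⟨l, hl⟩ := hk4.symm.dvd
  obtain ⟨i, hi⟩ := Subgroup.mem_zpowers_iff.1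
    (mem_zpowers_zpow_of_odd hG h (k := 2 * l + 1) ⟨l, rfl⟩)
  -- `(x * g) ^ 2 = x ^ (k + 1) * g ^ 2`, and `i` inverts `(k + 1) / 2` modulo the order of `h`.
  have hx : h ^ (-(i * j)) ∈ Subgroup.zpowers h := zpow_mem (Subgroup.mem_zpowers h) _
  refine ⟨_, hx, ?_⟩
  generalize hx' : h ^ (-(i * j)) = x at hx
  have hroot : x ^ (2 * l + 1) = h ^ (-j) := by
    calc x ^ (2 * l + 1) = ((h ^ (2 * l + 1)) ^ i) ^ (-j) := by
          rw [← hx', ← zpow_mul, ← zpow_mul, ← zpow_mul]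
          ring_nf
      _ = h ^ (-j) := by rw [hi]
  calc (x * g) ^ 2 = x * (g * x * g⁻¹) * g ^ 2 := by simp only [sq]; group
    _ = (x ^ (2 * l + 1)) ^ (2 : ℤ) * g ^ 2 := by
      rw [conj_eq_zpow_of_mem_zpowers hk hx, ← zpow_one_add, ← zpow_mul]
      congr 2
      omega
    _ = 1 := by
      rw [hroot, ← hj, ← zpow_natCast h 2, ← zpow_mul, ← zpow_mul, ← zpow_add]
      simp [mul_comm]

theorem index_centralizer_dvd_two {z : G} (hy : ∀ g, g * y * g⁻¹ = y ∨ g * y * g⁻¹ = z) :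
    (Subgroup.centralizer {y}).index ∣ 2 := by
  have hconj (g : G) : g ∈ Subgroup.centralizer {y} ↔ g * y * g⁻¹ = y :=
    Subgroup.mem_centralizer_singleton_iff.trans mul_inv_eq_iff_eq_mul.symm
  rw [Subgroup.index_dvd_two_iff']
  by_cases hcen : ∃ a, a * y * a⁻¹ = z
  · obtain ⟨a, ha⟩ := hcen
    refine ⟨a⁻¹, fun b => ?_⟩
    rw [hconj, hconj]
    refine (hy b).symm.imp_left fun hb => ?_
    calc a⁻¹ * b * y * (a⁻¹ * b)⁻¹ = a⁻¹ * (b * y * b⁻¹) * a := by group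
      _ = a⁻¹ * (a * y * a⁻¹) * a := by rw [hb, ha]
      _ = y := by group
  · exact ⟨1, fun b => .inr ((hconj b).2 ((hy b).resolve_right fun hb => hcen ⟨b, hb⟩))⟩

end Conjugation

section CyclicCentralizer

theorem isCyclic_of_orderOf_eq_four_of_mem_center {Q : Type*} [Group Q] [Finite Q]
    (hQ : IsPGroup 2 Q) {y : Q} (hy : orderOf y = 4) (hyc : y ∈ Subgroup.center Q)
    (hinv : ∀ t : Q, t ^ 2 = 1 → t ∈ Subgroup.zpowers y) : IsCyclic Q := by
  have := hQ.isNilpotent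
  obtain ⟨H, hyH, hcyc, hmax⟩ := Finite.exists_le_maximal
    (p := fun H : Subgroup Q => IsCyclic H) (a := Subgroup.zpowers y) inferInstance
  obtain ⟨h, rfl⟩ := (Subgroup.isCyclic_iff_exists_zpowers_eq_top H).1 hcyc
  by_contra hne
  have hlt : Subgroup.zpowers h < ⊤ := lt_top_iff_ne_top.2 fun htop =>
    hne ⟨h, (Subgroup.eq_top_iff' _).1 htop⟩
  obtain ⟨g, hgN, hgh, hg2⟩ := exists_mem_normalizer_notMem_pow_mem hQ hlt
  -- Either `g ^ 2` is a square in `⟨h⟩` and the coset `⟨h⟩g` contains an element of square one, or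
  -- `g ^ 2` generates `⟨h⟩` and `⟨g⟩` contradicts the maximality of `⟨h⟩`.
  obtain ⟨j, hj⟩ := Subgroup.mem_zpowers_iff.1 hg2
  rcases Int.even_or_odd' j with ⟨q, rfl | rfl⟩
  · obtain ⟨k, hk⟩ := Subgroup.mem_zpowers_iff.1
      ((Subgroup.mem_normalizer_iff.1 hgN h).1 (Subgroup.mem_zpowers h))
    have hk4 : k ≡ 1 [ZMOD 4] := by
      have := modEq_of_conj_eq_zpow (i := 1) hk.symm (Subgroup.zpowers_le.1 hyH)
        (by rw [zpow_one, conj_eq_iff_commute]; exact Subgroup.mem_center_iff.1 hyc g)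
      rwa [hy] at this
    obtain ⟨x, hx, hxg⟩ := exists_mul_sq_eq_one hQ hk.symm hk4
      (Subgroup.mem_zpowers_iff.2 ⟨q, by rw [← hj, zpow_mul, zpow_ofNat]⟩)
    exact hgh ((Subgroup.mul_mem_cancel_left _ hx).1 (hyH (hinv _ hxg)))
  · have hle : Subgroup.zpowers h ≤ Subgroup.zpowers g := by
      have hhg := mem_zpowers_zpow_of_odd hQ h (k := 2 * q + 1) ⟨q, rfl⟩
      rw [hj] at hhg
      exact Subgroup.zpowers_le.2
        (Subgroup.zpowers_le.2 (pow_mem (Subgroup.mem_zpowers g) 2) hhg)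
    exact hgh (hmax (inferInstanceAs (IsCyclic (Subgroup.zpowers g))) hle
      (Subgroup.mem_zpowers g))

theorem isCyclic_centralizer {P : Type*} [Group P] [Finite P] (hP : IsPGroup 2 P)
    (hno : ¬ ∃ f : C4xC2 →* P, Function.Injective f) {y : P} (hy : orderOf y = 4) :
    IsCyclic (Subgroup.centralizer {y}) := by
  have hyC : y ∈ Subgroup.centralizer {y} := Subgroup.mem_centralizer_singleton_iff.2 rfl
  refine isCyclic_of_orderOf_eq_four_of_mem_center (hP.to_subgroup _) (y := ⟨y, hyC⟩)
    (by rwa [Subgroup.orderOf_mk]) ?_ ?_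
  · exact Subgroup.mem_center_iff.2 fun g =>
      Subtype.ext (Subgroup.mem_centralizer_singleton_iff.1 g.2)
  · intro t ht
    have hty : Commute y (t : P) := (Subgroup.mem_centralizer_singleton_iff.1 t.2).symm
    rcases eq_one_or_eq_sq_of_commute hno hy (congrArg Subtype.val ht) hty with h | h
    · exact (Subtype.ext h : t = 1) ▸ one_mem _
    · exact (Subtype.ext h : t = ⟨y, hyC⟩ ^ 2) ▸ pow_mem (Subgroup.mem_zpowers _) 2

end CyclicCentralizer

section NormalCyclicSubgroup

theorem exists_notMem_center_commutator_mem_center {G : Type*} [Group G] [Group.IsNilpotent G]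
    (hG : Subgroup.center G ≠ ⊤) :
    ∃ t ∉ Subgroup.center G, ∀ g, g * t * g⁻¹ * t⁻¹ ∈ Subgroup.center G := by
  have : Nontrivial (G ⧸ Subgroup.center G) := QuotientGroup.nontrivial_iff.2 hG
  obtain ⟨⟨q, hqc⟩, hq1⟩ := Subgroup.ne_bot_iff_exists_ne_one.1
    (Group.IsNilpotent.center_ne_bot (G := G ⧸ Subgroup.center G))
  obtain ⟨t, rfl⟩ := QuotientGroup.mk_surjective q
  refine ⟨t, fun ht => hq1 (Subtype.ext ((QuotientGroup.eq_one_iff t).2 ht)), fun g => ?_⟩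
  have hcomm : (g : G ⧸ Subgroup.center G) * t * (g : G ⧸ Subgroup.center G)⁻¹ = t :=
    conj_eq_iff_commute.2 (Subgroup.mem_center_iff.1 hqc g)
  rw [← QuotientGroup.eq_one_iff]
  simp only [QuotientGroup.mk_mul, QuotientGroup.mk_inv, hcomm, mul_inv_cancel]

variable {P : Type*} [Group P]

theorem conj_eq_or_eq_inv_of_mem_of_sq_mem (hno : ¬ ∃ f : C4xC2 →* P, Function.Injective f)
    {E : Subgroup P} [hE : E.Normal] (hE2 : ∀ x ∈ E, x ^ 2 = 1) {w e : P}
    (hw : orderOf w = 4) (he : e ∈ E) (hwE : w ^ 2 ∈ E) : e * w * e⁻¹ = w ∨ e * w * e⁻¹ = w⁻¹ := by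
  have hEcomm {a b : P} (ha : a ∈ E) (hb : b ∈ E) : Commute a b :=
    commute_of_sq_eq_one (hE2 a ha) (hE2 b hb) (hE2 _ (mul_mem ha hb))
  have hew : w * e * w⁻¹ ∈ E := hE.conj_mem e he w
  -- Since `e` is its own inverse, `c` is the commutator of `e` and `w`.
  set c := e * (w * e * w⁻¹) with hc
  have he1 : e⁻¹ = e := inv_eq_of_mul_eq_one_left (by rw [← sq, hE2 e he])
  have hconj : e * w * e⁻¹ = c * w := by rw [hc, he1]; group
  have hwc : Commute w c := by
    refine conj_eq_iff_commute.1 ?_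
    calc w * c * w⁻¹ = (w * e * w⁻¹) * (w ^ 2 * e * (w ^ 2)⁻¹) := by
          rw [hc, sq]
          group
      _ = (w * e * w⁻¹) * e := by
          rw [conj_eq_iff_commute.2 (hEcomm hwE he)]
      _ = c := hEcomm hew he
  refine (eq_one_or_eq_sq_of_commute hno hw (hE2 c (mul_mem he hew)) hwc).imp ?_ ?_ <;>
    intro h <;> rw [hconj, h]
  · exact one_mul w
  · refine eq_inv_of_mul_eq_one_left ?_
    rw [mul_assoc, ← sq, ← pow_add]
    exact orderOf_dvd_iff_pow_eq_one.1 hw.dvd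

theorem conj_eq_or_eq_inv_of_index_dvd_two (hno : ¬ ∃ f : C4xC2 →* P, Function.Injective f)
    {E : Subgroup P} (hE : E.index ∣ 2) (hE2 : ∀ x ∈ E, x ^ 2 = 1) {w : P}
    (hw : orderOf w = 4) (g : P) : g * w * g⁻¹ = w ∨ g * w * g⁻¹ = w⁻¹ := by
  have hwE : w ∉ E := fun h => by
    have := orderOf_dvd_of_pow_eq_one (hE2 w h)
    norm_num [hw] at this
  have hindex : E.index = 2 := ((Nat.dvd_prime Nat.prime_two).1 hE).resolve_left fun h1 =>
    hwE ((Subgroup.eq_top_iff' E).1 (Subgroup.index_eq_one.1 h1) w)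
  have := Subgroup.normal_of_index_eq_two hindex
  have hw2E : w ^ 2 ∈ E := Subgroup.sq_mem_of_index_two hindex w
  by_cases hg : g ∈ E
  · exact conj_eq_or_eq_inv_of_mem_of_sq_mem hno hE2 hw hg hw2E
  · have hgw : g * w ∈ E := (Subgroup.mul_mem_iff_of_index_two hindex).2 (iff_of_false hg hwE)
    simpa [mul_assoc] using conj_eq_or_eq_inv_of_mem_of_sq_mem hno hE2 hw hgw hw2E

theorem exists_notMem_center_conj_eq_or_eq_sq_mul [Group.IsNilpotent P]
    (hno : ¬ ∃ f : C4xC2 →* P, Function.Injective f)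
    (hcen : ∀ z ∈ Subgroup.center P, z ^ 2 = 1) {w : P} (hw : orderOf w = 4) :
    w ^ 2 ∈ Subgroup.center P ∧ ∃ t ∉ Subgroup.center P, (t ^ 2 = 1 ∨ t ^ 2 = w ^ 2) ∧
      ∀ g, g * t * g⁻¹ = t ∨ g * t * g⁻¹ = w ^ 2 * t := by
  have hw2 : w ^ 2 ≠ 1 := pow_ne_one_of_lt_orderOf two_ne_zero (by omega)
  have hcentral {z : P} (hz : z ∈ Subgroup.center P) : z = 1 ∨ z = w ^ 2 :=
    eq_one_or_eq_sq_of_commute hno hw (hcen z hz) (Subgroup.mem_center_iff.1 hz w)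
  obtain ⟨t, ht, htc⟩ := exists_notMem_center_commutator_mem_center (G := P)
    fun htop => hw2 (hcen w (htop ▸ Subgroup.mem_top w))
  have hconj (g : P) : g * t * g⁻¹ = t ∨ g * t * g⁻¹ = w ^ 2 * t :=
    (hcentral (htc g)).imp mul_inv_eq_one.1 mul_inv_eq_iff_eq_mul.1
  have hw2c : w ^ 2 ∈ Subgroup.center P := by
    obtain ⟨g, hg⟩ : ∃ g, ¬ Commute g t := by
      simpa [Subgroup.mem_center_iff, commute_iff_eq] using ht
    exact (hcentral (htc g)).resolve_left
      (fun h => hg (conj_eq_iff_commute.1 (mul_inv_eq_one.1 h))) ▸ htc g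
  have ht2c : t ^ 2 ∈ Subgroup.center P := by
    refine Subgroup.mem_center_iff.2 fun g => conj_eq_iff_commute.1 ?_
    rw [← conj_pow]
    rcases hconj g with h | h <;> rw [h]
    rw [(show Commute (w ^ 2) t from (Subgroup.mem_center_iff.1 hw2c t).symm).mul_pow,
      hcen _ hw2c, one_mul]
  exact ⟨hw2c, t, ht, hcentral ht2c, hconj⟩

theorem sq_eq_one_of_commute_of_notMem_center (hP : IsPGroup 2 P)
    (hno : ¬ ∃ f : C4xC2 →* P, Function.Injective f) {t z : P} (ht : t ∉ Subgroup.center P)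
    (ht2 : t ^ 2 = 1) (hz : z ∈ Subgroup.center P) (hz1 : z ≠ 1) (hz2 : z ^ 2 = 1) {e : P}
    (het : Commute e t) : e ^ 2 = 1 := by
  by_contra he
  obtain ⟨i, hi⟩ := exists_orderOf_pow_eq_four hP he
  have ht1 : t ≠ 1 := fun h => ht (h ▸ one_mem _)
  have htv : t = (e ^ i) ^ 2 :=
    (eq_one_or_eq_sq_of_commute hno hi ht2 (het.pow_left i)).resolve_left ht1
  have hzv : z = (e ^ i) ^ 2 :=
    (eq_one_or_eq_sq_of_commute hno hi hz2 (Subgroup.mem_center_iff.1 hz _)).resolve_left hz1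
  exact ht (htv.trans hzv.symm ▸ hz)

theorem exists_orderOf_eq_four_forall_conj_eq_or_eq_inv [Group.IsNilpotent P] (hP : IsPGroup 2 P)
    (hno : ¬ ∃ f : C4xC2 →* P, Function.Injective f) {w : P} (hw : orderOf w = 4) :
    ∃ y : P, orderOf y = 4 ∧ ∀ g, g * y * g⁻¹ = y ∨ g * y * g⁻¹ = y⁻¹ := by
  have hw2 : w ^ 2 ≠ 1 := pow_ne_one_of_lt_orderOf two_ne_zero (by omega)
  by_cases hcen : ∀ z ∈ Subgroup.center P, z ^ 2 = 1
  · obtain ⟨hw2c, t, ht, ht2 | ht2, hconj⟩ :=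
      exists_notMem_center_conj_eq_or_eq_sq_mul hno hcen hw
    · exact ⟨w, hw, conj_eq_or_eq_inv_of_index_dvd_two hno (index_centralizer_dvd_two hconj)
        (fun e he => sq_eq_one_of_commute_of_notMem_center hP hno ht ht2 hw2c hw2 (hcen _ hw2c)
          (Subgroup.mem_centralizer_singleton_iff.1 he)) hw⟩
    · have ht4 : orderOf t = 2 ^ (1 + 1) := by
        refine orderOf_eq_prime_pow (by rwa [pow_one, ht2]) ?_
        rw [pow_succ, pow_mul, pow_one, ht2, hcen _ hw2c]
      have htinv : w ^ 2 * t = t⁻¹ := by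
        refine eq_inv_of_mul_eq_one_left ?_
        rw [mul_assoc, ← sq, ht2, ← sq, hcen _ hw2c]
      exact ⟨t, ht4, htinv ▸ hconj⟩
  · push Not at hcen
    obtain ⟨x, hxc, hx2⟩ := hcen
    obtain ⟨i, hi⟩ := exists_orderOf_pow_eq_four hP hx2
    exact ⟨x ^ i, hi, fun g =>
      .inl (conj_eq_iff_commute.2 (Subgroup.mem_center_iff.1 (pow_mem hxc i) g))⟩

end NormalCyclicSubgroup

section Recognition

variable {P : Type*} [Group P] {g h : P}

theorem nonempty_mulEquiv_of_index_zpowers_eq_two {G : Type*} [Group G] [Finite G]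
    (hindex : (Subgroup.zpowers h).index = 2) (hgh : g ∉ Subgroup.zpowers h)
    (hcard : Nat.card G ≤ 2 * orderOf h) {x a : G} (hF : ∃ F : G →* P, F x = h ∧ F a = g) :
    Nonempty (P ≃* G) := by
  obtain ⟨F, hFx, hFa⟩ := hF
  have hle : Subgroup.zpowers h ≤ F.range := Subgroup.zpowers_le.2 ⟨x, hFx⟩
  have hsurj : Function.Surjective F := fun y => by
    by_cases hy : y ∈ Subgroup.zpowers h
    · exact hle hy
    · have hgy : g * y ∈ Subgroup.zpowers h :=
        (Subgroup.mul_mem_iff_of_index_two hindex).2 (iff_of_false hgh hy)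
      exact (Subgroup.mul_mem_cancel_left F.range ⟨a, hFa⟩).1 (hle hgy)
  have hP : Nat.card P = 2 * orderOf h := by
    rw [← Subgroup.index_mul_card (Subgroup.zpowers h), hindex, Nat.card_zpowers]
  exact ⟨(MulEquiv.ofBijective F (hsurj.bijective_of_nat_card_le (hP ▸ hcard))).symm⟩

theorem zpow_intCast_zmod_cast {N : ℕ} (hN : h ^ N = 1) (i : ℤ) :
    h ^ ((i : ZMod N).cast : ℤ) = h ^ i := by
  rw [zpow_eq_zpow_iff_modEq]
  refine Int.ModEq.of_dvd (Int.natCast_dvd_natCast.2 (orderOf_dvd_of_pow_eq_one hN)) ?_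
  rw [← ZMod.intCast_eq_intCast_iff, ZMod.intCast_zmod_cast]

theorem zpow_mul_mul_zpow_of_conj_eq_inv (hconj : g * h * g⁻¹ = h⁻¹) (i j : ℤ) :
    h ^ i * (g * h ^ j) = g * h ^ (j - i) := by
  have hmove : g * h ^ (-i) * g⁻¹ = h ^ i := by
    rw [← conj_zpow, hconj, inv_zpow, zpow_neg, inv_inv]
  rw [← hmove, sub_eq_neg_add, zpow_add]
  group

theorem mul_zpow_mul_mul_zpow_of_conj_eq_inv (hconj : g * h * g⁻¹ = h⁻¹) (i j : ℤ) :
    g * h ^ i * (g * h ^ j) = g ^ 2 * h ^ (j - i) := by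
  rw [mul_assoc, zpow_mul_mul_zpow_of_conj_eq_inv hconj, ← mul_assoc, sq]

theorem exists_dihedralGroup_hom {N : ℕ} (hN : h ^ N = 1) (hg : g ^ 2 = 1)
    (hconj : g * h * g⁻¹ = h⁻¹) :
    ∃ F : DihedralGroup N →* P, F (.r 1) = h ∧ F (.sr 0) = g := by
  let f : DihedralGroup N → P
    | .r i => h ^ (i.cast : ℤ)
    | .sr i => g * h ^ (i.cast : ℤ)
  have hr (i : ℤ) : f (.r i) = h ^ i := zpow_intCast_zmod_cast hN i
  have hs (i : ℤ) : f (.sr i) = g * h ^ i := congrArg (g * ·) (zpow_intCast_zmod_cast hN i)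
  have hf : ∀ a b, f (a * b) = f a * f b := by
    rintro (i | i) (j | j) <;> obtain ⟨i, rfl⟩ := ZMod.intCast_surjective i <;>
      obtain ⟨j, rfl⟩ := ZMod.intCast_surjective j
    · rw [DihedralGroup.r_mul_r, ← Int.cast_add, hr, hr, hr, zpow_add]
    · rw [DihedralGroup.r_mul_sr, ← Int.cast_sub, hr, hs, hs,
        zpow_mul_mul_zpow_of_conj_eq_inv hconj]
    · rw [DihedralGroup.sr_mul_r, ← Int.cast_add, hr, hs, hs, zpow_add, mul_assoc]
    · rw [DihedralGroup.sr_mul_sr, ← Int.cast_sub, hr, hs, hs,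
        mul_zpow_mul_mul_zpow_of_conj_eq_inv hconj, hg, one_mul]
  exact ⟨MonoidHom.mk' f hf, by simpa using hr 1, by simpa using hs 0⟩

theorem exists_quaternionGroup_hom {m : ℕ} (hm : h ^ (2 * m) = 1) (hg : g ^ 2 = h ^ m)
    (hconj : g * h * g⁻¹ = h⁻¹) :
    ∃ F : QuaternionGroup m →* P, F (.a 1) = h ∧ F (.xa 0) = g := by
  let f : QuaternionGroup m → P
    | .a i => h ^ (i.cast : ℤ)
    | .xa i => g * h ^ (i.cast : ℤ)
  have ha (i : ℤ) : f (.a i) = h ^ i := zpow_intCast_zmod_cast hm i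
  have hx (i : ℤ) : f (.xa i) = g * h ^ i := congrArg (g * ·) (zpow_intCast_zmod_cast hm i)
  have hf : ∀ a b, f (a * b) = f a * f b := by
    rintro (i | i) (j | j) <;> obtain ⟨i, rfl⟩ := ZMod.intCast_surjective i <;>
      obtain ⟨j, rfl⟩ := ZMod.intCast_surjective j
    · rw [QuaternionGroup.a_mul_a, ← Int.cast_add, ha, ha, ha, zpow_add]
    · rw [QuaternionGroup.a_mul_xa, ← Int.cast_sub, ha, hx, hx,
        zpow_mul_mul_zpow_of_conj_eq_inv hconj]
    · rw [QuaternionGroup.xa_mul_a, ← Int.cast_add, ha, hx, hx, zpow_add, mul_assoc]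
    · rw [QuaternionGroup.xa_mul_xa, add_sub_assoc, ← Int.cast_natCast, ← Int.cast_sub,
        ← Int.cast_add, ha, hx, hx, mul_zpow_mul_mul_zpow_of_conj_eq_inv hconj, hg, zpow_add,
        zpow_natCast]
  exact ⟨MonoidHom.mk' f hf, by simpa using ha 1, by simpa using hx 0⟩

theorem exists_semidihedralGroup_hom {n : ℕ} (hn : h ^ 2 ^ n = 1) (hg : g ^ 2 = 1)
    (hconj : g * h * g⁻¹ = h ^ (2 ^ (n - 1) - 1)) :
    ∃ F : SemidihedralGroup n →* P, F (.of true) = h ∧ F (.of false) = g := by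
  have hginv : g⁻¹ = g := inv_eq_of_mul_eq_one_left (by rw [← sq, hg])
  have hrels : ∀ r ∈ semidihedralRels n, FreeGroup.lift (fun b => bif b then h else g) r = 1 := by
    rintro r (rfl | rfl | rfl)
    · simpa using hn
    · simpa using hg
    · simpa [mul_inv_eq_one, hginv] using hconj
  exact ⟨PresentedGroup.toGroup hrels, PresentedGroup.toGroup.of hrels,
    PresentedGroup.toGroup.of hrels⟩

open Pointwise in
theorem finite_and_card_le_of_closure_pair {G : Type*} [Group G] {x a : G}
    (hx : IsOfFinOrder x) (ha : IsOfFinOrder a) (hgen : Subgroup.closure {x, a} = ⊤)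
    (hconj : a * x * a⁻¹ ∈ Subgroup.zpowers x) :
    Finite G ∧ Nat.card G ≤ orderOf a * orderOf x := by
  have : Finite (Subgroup.zpowers x) := hx.finite_zpowers
  have hnormal : (Subgroup.zpowers x).Normal := by
    have hle : Subgroup.closure {x, a} ≤ Subgroup.normalizer (Subgroup.zpowers x : Set G) := by
      rw [Subgroup.closure_le, Set.pair_subset_iff]
      refine ⟨Subgroup.le_normalizer (Subgroup.mem_zpowers x),
        Subgroup.mem_normalizer_fintype ?_⟩
      rintro _ ⟨i, rfl⟩
      exact conj_zpow (a := a) (b := x) ▸ zpow_mem hconj i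
    rwa [hgen, top_le_iff, Subgroup.normalizer_eq_top_iff] at hle
  have huniv : (Subgroup.zpowers a : Set G) * (Subgroup.zpowers x : Set G) = Set.univ := by
    rw [← Subgroup.mul_normal, Subgroup.zpowers_eq_closure, Subgroup.zpowers_eq_closure,
      ← Subgroup.closure_union, Set.singleton_union, Set.pair_comm, hgen, Subgroup.coe_top]
  refine ⟨Set.finite_univ_iff.1 (huniv ▸ ha.finite_zpowers.mul hx.finite_zpowers), ?_⟩
  calc Nat.card G = Nat.card (Set.univ : Set G) := Nat.card_univ.symm
    _ ≤ Nat.card (Subgroup.zpowers a) * Nat.card (Subgroup.zpowers x) :=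
      huniv ▸ Set.natCard_mul_le
    _ = orderOf a * orderOf x := by rw [Nat.card_zpowers, Nat.card_zpowers]

theorem finite_and_card_semidihedralGroup_le (n : ℕ) :
    Finite (SemidihedralGroup n) ∧ Nat.card (SemidihedralGroup n) ≤ 2 * 2 ^ n := by
  set x : SemidihedralGroup n := .of true
  set a : SemidihedralGroup n := .of false
  have hx : x ^ 2 ^ n = 1 := PresentedGroup.one_of_mem (.inl rfl)
  have ha : a ^ 2 = 1 := PresentedGroup.one_of_mem (.inr (.inl rfl))
  have hax : a * x * a * (x ^ (2 ^ (n - 1) - 1))⁻¹ = 1 :=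
    PresentedGroup.one_of_mem (.inr (.inr rfl))
  have hconj : a * x * a⁻¹ ∈ Subgroup.zpowers x := by
    rw [inv_eq_of_mul_eq_one_left (by rw [← sq, ha]), mul_inv_eq_one.1 hax]
    exact pow_mem (Subgroup.mem_zpowers x) _
  have hgen : Subgroup.closure {x, a} = ⊤ := by
    rw [← PresentedGroup.closure_range_of, Bool.range_eq, Set.pair_comm]
  obtain ⟨hfin, hcard⟩ := finite_and_card_le_of_closure_pair
    (isOfFinOrder_iff_pow_eq_one.2 ⟨_, by positivity, hx⟩)
    (isOfFinOrder_iff_pow_eq_one.2 ⟨_, by positivity, ha⟩) hgen hconj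
  exact ⟨hfin, hcard.trans (Nat.mul_le_mul (orderOf_le_of_pow_eq_one two_pos ha)
    (orderOf_le_of_pow_eq_one (by positivity) hx))⟩

end Recognition

section CyclicIndexTwo

variable {P : Type*} [Group P] {g h : P}

theorem nonempty_mulEquiv_dihedralGroup {N : ℕ} [NeZero N] (hh : orderOf h = N)
    (hindex : (Subgroup.zpowers h).index = 2) (hgh : g ∉ Subgroup.zpowers h) (hg : g ^ 2 = 1)
    (hconj : g * h * g⁻¹ = h⁻¹) : Nonempty (P ≃* DihedralGroup N) :=
  nonempty_mulEquiv_of_index_zpowers_eq_two hindex hgh (by rw [DihedralGroup.nat_card, hh])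
    (exists_dihedralGroup_hom (hh ▸ pow_orderOf_eq_one h) hg hconj)

theorem nonempty_mulEquiv_quaternionGroup {m : ℕ} [NeZero m] (hh : orderOf h = 2 * m)
    (hindex : (Subgroup.zpowers h).index = 2) (hgh : g ∉ Subgroup.zpowers h) (hg : g ^ 2 = h ^ m)
    (hconj : g * h * g⁻¹ = h⁻¹) : Nonempty (P ≃* QuaternionGroup m) :=
  nonempty_mulEquiv_of_index_zpowers_eq_two hindex hgh
    (by rw [Nat.card_eq_fintype_card, QuaternionGroup.card, hh]; omega)
    (exists_quaternionGroup_hom (hh ▸ pow_orderOf_eq_one h) hg hconj)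

theorem nonempty_mulEquiv_semidihedralGroup {n : ℕ} (hh : orderOf h = 2 ^ n)
    (hindex : (Subgroup.zpowers h).index = 2) (hgh : g ∉ Subgroup.zpowers h) (hg : g ^ 2 = 1)
    (hconj : g * h * g⁻¹ = h ^ (2 ^ (n - 1) - 1)) : Nonempty (P ≃* SemidihedralGroup n) := by
  obtain ⟨_, hcard⟩ := finite_and_card_semidihedralGroup_le n
  exact nonempty_mulEquiv_of_index_zpowers_eq_two hindex hgh (hh ▸ hcard)
    (exists_semidihedralGroup_hom (hh ▸ pow_orderOf_eq_one h) hg hconj)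

theorem mul_sq_eq_one_of_conj_eq_pow_sub_one {m : ℕ} (hm : 0 < m) (hh : h ^ (2 * m) = 1)
    (hg : g ^ 2 = h ^ m) (hconj : g * h * g⁻¹ = h ^ (m - 1)) : (h * g) ^ 2 = 1 :=
  calc (h * g) ^ 2 = h * (g * h * g⁻¹) * g ^ 2 := by simp only [sq]; group
    _ = h ^ m * h ^ m := by rw [hconj, mul_pow_sub_one hm.ne', hg]
    _ = 1 := by rw [← pow_add, ← two_mul, hh]

variable {m : ℕ} {k : ℤ}

theorem sq_eq_one_or_eq_pow_of_conj_eq_zpow (hP : IsPGroup 2 P) (hh : orderOf h = 2 * m)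
    (hg2 : g ^ 2 ∈ Subgroup.zpowers h) (hconj : g * h * g⁻¹ = h ^ k) (hk : k ≡ -1 [ZMOD 4]) :
    g ^ 2 = 1 ∨ g ^ 2 = h ^ m := by
  refine eq_one_or_eq_pow_of_sq_eq_one hh hg2 (sq_eq_one_of_zpow_sub_one_eq_one hP hk ?_)
  rw [zpow_sub_one, ← conj_eq_zpow_of_mem_zpowers hconj hg2, mul_inv_eq_one]
  exact conj_eq_iff_commute.2 (Commute.self_pow g 2)

theorem conj_eq_inv_or_eq_pow_sub_one_of_conj_eq_zpow (hP : IsPGroup 2 P) (hm : 0 < m)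
    (hh : orderOf h = 2 * m) (hg2 : g ^ 2 ∈ Subgroup.zpowers h) (hconj : g * h * g⁻¹ = h ^ k)
    (hk : k ≡ -1 [ZMOD 4]) : g * h * g⁻¹ = h⁻¹ ∨ g * h * g⁻¹ = h ^ (m - 1) := by
  have hkk : h ^ (k * k) = h := by
    obtain ⟨i, hi⟩ := Subgroup.mem_zpowers_iff.1 hg2
    calc h ^ (k * k) = g * (g * h * g⁻¹) * g⁻¹ := by rw [zpow_mul, hconj, ← conj_zpow, hconj]
      _ = g ^ 2 * h * (g ^ 2)⁻¹ := by rw [sq]; group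
      _ = h := conj_eq_iff_commute.2 (hi ▸ (Commute.refl h).zpow_left i)
  have hmem : h ^ (k + 1) ∈ Subgroup.zpowers h := zpow_mem (Subgroup.mem_zpowers h) _
  have hsq : (h ^ (k + 1)) ^ 2 = 1 := by
    refine sq_eq_one_of_zpow_sub_one_eq_one hP hk ?_
    rw [← zpow_mul, show (k + 1) * (k - 1) = k * k - 1 by ring, zpow_sub_one, hkk, mul_inv_cancel]
  rw [hconj]
  refine (eq_one_or_eq_pow_of_sq_eq_one hh hmem hsq).imp (fun h1 => ?_) fun hu => ?_
  · rw [eq_inv_iff_mul_eq_one, ← zpow_add_one, h1]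
  · rw [pow_sub h hm, pow_one, ← hu, zpow_add_one, mul_inv_cancel_right]

theorem quaternion_or_dihedral_or_semidihedral_of_conj_eq_zpow {n : ℕ} (hP : IsPGroup 2 P)
    (hh : orderOf h = 2 ^ (n + 2)) (hindex : (Subgroup.zpowers h).index = 2)
    (hgh : g ∉ Subgroup.zpowers h) (hconj : g * h * g⁻¹ = h ^ k) (hk : k ≡ -1 [ZMOD 4]) :
    Nonempty (P ≃* QuaternionGroup (2 ^ (n + 1))) ∨ Nonempty (P ≃* DihedralGroup (2 ^ (n + 2))) ∨
      1 ≤ n ∧ Nonempty (P ≃* SemidihedralGroup (n + 2)) := by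
  have hh' : orderOf h = 2 * 2 ^ (n + 1) := by rw [hh, ← pow_succ']
  have hg2 : g ^ 2 ∈ Subgroup.zpowers h := Subgroup.sq_mem_of_index_two hindex g
  have hsq := sq_eq_one_or_eq_pow_of_conj_eq_zpow hP hh' hg2 hconj hk
  rcases conj_eq_inv_or_eq_pow_sub_one_of_conj_eq_zpow hP (by positivity) hh' hg2 hconj hk
    with hinv | hsd
  · rcases hsq with h1 | hu
    · exact .inr (.inl (nonempty_mulEquiv_dihedralGroup hh hindex hgh h1 hinv))
    · exact .inl (nonempty_mulEquiv_quaternionGroup hh' hindex hgh hu hinv)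
  · have hn : 1 ≤ n := by
      by_contra! hn
      obtain rfl : n = 0 := by omega
      have hk1 : k ≡ 1 [ZMOD 4] := by
        have := modEq_of_conj_eq_zpow (i := 1) hconj (Subgroup.mem_zpowers h) (by simpa using hsd)
        rwa [hh] at this
      have := hk.symm.trans hk1
      contradiction
    refine .inr (.inr ⟨hn, ?_⟩)
    rcases hsq with h1 | hu
    · exact nonempty_mulEquiv_semidihedralGroup hh hindex hgh h1 hsd
    · refine nonempty_mulEquiv_semidihedralGroup (g := h * g) hh hindex ?_ ?_ ?_
      · rwa [Subgroup.mul_mem_cancel_left _ (Subgroup.mem_zpowers h)]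
      · exact mul_sq_eq_one_of_conj_eq_pow_sub_one (by positivity) (hh' ▸ pow_orderOf_eq_one h)
          hu hsd
      · calc h * g * h * (h * g)⁻¹ = h * (g * h * g⁻¹) * h⁻¹ := by group
          _ = h ^ (2 ^ (n + 1) - 1) := by
            rw [hsd, conj_eq_iff_commute]
            exact Commute.self_pow h _

theorem exists_conj_eq_zpow_of_zpowers_eq_centralizer {y : P} (hy : orderOf y = 4)
    (hconj : ∀ g, g * y * g⁻¹ = y ∨ g * y * g⁻¹ = y⁻¹)
    (hC : Subgroup.zpowers h = Subgroup.centralizer {y})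
    (hindex : (Subgroup.zpowers h).index = 2) :
    ∃ g ∉ Subgroup.zpowers h, ∃ k : ℤ, g * h * g⁻¹ = h ^ k ∧ k ≡ -1 [ZMOD 4] := by
  have hnormal := Subgroup.normal_of_index_eq_two hindex
  obtain ⟨g, hgh⟩ : ∃ g, g ∉ Subgroup.zpowers h := by
    by_contra! hall
    rw [(Subgroup.eq_top_iff' _).2 hall, Subgroup.index_top] at hindex
    contradiction
  obtain ⟨k, hk⟩ := Subgroup.mem_zpowers_iff.1 (hnormal.conj_mem h (Subgroup.mem_zpowers h) g)
  have hyh : y ∈ Subgroup.zpowers h := hC ▸ Subgroup.mem_centralizer_singleton_iff.2 rfl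
  have hgy : g * y * g⁻¹ = y ^ (-1 : ℤ) := by
    rw [zpow_neg_one]
    refine (hconj g).resolve_left fun hg => hgh ?_
    exact hC ▸ Subgroup.mem_centralizer_singleton_iff.2 (conj_eq_iff_commute.1 hg)
  refine ⟨g, hgh, k, hk.symm, ?_⟩
  have := modEq_of_conj_eq_zpow hk.symm hyh hgy
  rwa [hy] at this

theorem quaternion_or_dihedral_or_semidihedral_of_zpowers_eq_centralizer (hP : IsPGroup 2 P)
    {y : P} (hy : orderOf y = 4) (hconj : ∀ g, g * y * g⁻¹ = y ∨ g * y * g⁻¹ = y⁻¹)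
    (hC : Subgroup.zpowers h = Subgroup.centralizer {y})
    (hindex : (Subgroup.zpowers h).index = 2) :
    (∃ n, 3 ≤ n ∧ Nonempty (P ≃* QuaternionGroup (2 ^ (n - 2)))) ∨
      (∃ n, Nonempty (P ≃* DihedralGroup n)) ∨
      (∃ n, 3 ≤ n ∧ Nonempty (P ≃* SemidihedralGroup n)) := by
  have hyh : y ∈ Subgroup.zpowers h := hC ▸ Subgroup.mem_centralizer_singleton_iff.2 rfl
  have hh2 : h ^ 2 ≠ 1 := fun h2 => by
    have := (orderOf_dvd_of_mem_zpowers hyh).trans (orderOf_dvd_of_pow_eq_one h2)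
    norm_num [hy] at this
  obtain ⟨n, hn⟩ := exists_orderOf_eq_two_pow_add_two hP hh2
  obtain ⟨g, hgh, k, hk, hk4⟩ :=
    exists_conj_eq_zpow_of_zpowers_eq_centralizer hy hconj hC hindex
  rcases quaternion_or_dihedral_or_semidihedral_of_conj_eq_zpow hP hn hindex hgh hk hk4 with
    hQ | hD | ⟨h1, hSD⟩
  · exact .inl ⟨n + 3, by omega, hQ⟩
  · exact .inr (.inl ⟨_, hD⟩)
  · exact .inr (.inr ⟨n + 2, by omega, hSD⟩)

end CyclicIndexTwo

/-- A finite 2-group containing no subgroup isomorphic to `C4 × C2` is elementary abelian,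
cyclic, generalized quaternion, dihedral, or semidihedral. -/
theorem finite_two_group_no_C4xC2 (P : Type*) [Group P] [Finite P]
    (hP : IsPGroup 2 P)
    (hno : ¬ ∃ f : C4xC2 →* P, Function.Injective f) :
    ((∀ x : P, x ^ 2 = 1) ∧ ∀ x y : P, x * y = y * x) ∨
      IsCyclic P ∨
      (∃ n, 3 ≤ n ∧ Nonempty (P ≃* QuaternionGroup (2 ^ (n - 2)))) ∨
      (∃ n, Nonempty (P ≃* DihedralGroup n)) ∨
      (∃ n, 3 ≤ n ∧ Nonempty (P ≃* SemidihedralGroup n)) := by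
  by_cases hexp : ∀ x : P, x ^ 2 = 1
  · exact .inl ⟨hexp, fun x y => commute_of_sq_eq_one (hexp x) (hexp y) (hexp (x * y))⟩
  push Not at hexp
  obtain ⟨x, hx⟩ := hexp
  obtain ⟨i, hxi⟩ := exists_orderOf_pow_eq_four hP hx
  have := hP.isNilpotent
  obtain ⟨y, hy, hconj⟩ := exists_orderOf_eq_four_forall_conj_eq_or_eq_inv hP hno hxi
  obtain ⟨h, hC⟩ := (Subgroup.isCyclic_iff_exists_zpowers_eq_top _).1
    (isCyclic_centralizer hP hno hy)
  rcases (Nat.dvd_prime Nat.prime_two).1 (hC ▸ index_centralizer_dvd_two hconj) with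
    hindex | hindex
  · exact .inr (.inl ⟨h, (Subgroup.eq_top_iff' _).1 (Subgroup.index_eq_one.1 hindex)⟩)
  · exact .inr (.inr
      (quaternion_or_dihedral_or_semidihedral_of_zpowers_eq_centralizer hP hy hconj hC hindex))
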